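/- arXiv:1905.12615 — 5 statements merged into one kernel-verified Lean document; each statement's English description precedes it below -/
import Mathlib

section
/- Let d ∈ ℕ, L > 0, and let J : ℝ^d → ℝ be differentiable with L-Lipschitz gradient, i.e. ‖∇J(x) − ∇J(y)‖₂ ≤ L‖x − y‖₂ for all x, y. Then for any θ, v ∈ ℝ^d and any step size η > 0, setting θ' = θ + ηv, one has J(θ') ≥ J(θ) − (3η/4)‖∇J(θ) − v‖₂² + (1/(4η) − L/2)‖θ' − θ‖₂² + (η/8)‖∇J(θ)‖₂². -/
/-! Along the segment from `θ` to `θ + η • v` the slope of `J` drops at most linearly, so `J` lies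
above its linearization at `θ` minus `L / 2 * ‖η • v‖ ^ 2`. Polarizing the linear term
`η * ⟪∇ J θ, v⟫` gives the ascent inequality with every coefficient `3 * η / 4`, `1 / (4 * η)`,
`η / 8` replaced by the sharper `η / 2`, `1 / (2 * η)`, `η / 2`. -/

section

open Set
open scoped Gradient RealInnerProductSpace

theorem quadratic_le_of_affine_le_deriv_right {f f' : ℝ → ℝ} {a b m c : ℝ} (hab : a ≤ b)
    (hcont : ContinuousOn f (Icc a b))
    (hderiv : ∀ t ∈ Ico a b, HasDerivWithinAt f (f' t) (Ici t) t)
    (hbound : ∀ t ∈ Ico a b, m + c * (t - a) ≤ f' t) :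
    f a + m * (b - a) + c / 2 * (b - a) ^ 2 ≤ f b := by
  have hquad (t : ℝ) : HasDerivAt (fun t ↦ f a + m * (t - a) + c / 2 * (t - a) ^ 2)
      (m + c * (t - a)) t := by
    have hsub : HasDerivAt (fun t ↦ t - a) 1 t := (hasDerivAt_id t).sub_const a
    refine (((hsub.const_mul m).const_add (f a)).add
      ((hsub.pow 2).const_mul (c / 2))).congr_deriv ?_
    ring
  exact image_le_of_deriv_right_le_deriv_boundary
    (fun t _ ↦ (hquad t).continuousAt.continuousWithinAt)
    (fun t _ ↦ (hquad t).hasDerivWithinAt) (by simp) hcont hderiv hbound (right_mem_Icc.2 hab)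

theorem neg_mul_norm_sq_le_inner_of_norm_le {E : Type*} [NormedAddCommGroup E]
    [InnerProductSpace ℝ E] {u w : E} {L : ℝ} (h : ‖u‖ ≤ L * ‖w‖) :
    -L * ‖w‖ ^ 2 ≤ ⟪u, w⟫ :=
  calc -L * ‖w‖ ^ 2 = -(L * ‖w‖ * ‖w‖) := by ring
    _ ≤ -(‖u‖ * ‖w‖) := by gcongr
    _ ≤ ⟪u, w⟫ := neg_le_of_abs_le (abs_real_inner_le_norm u w)

variable {E : Type*} [NormedAddCommGroup E] [InnerProductSpace ℝ E] [CompleteSpace E] {J : E → ℝ}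

theorem hasDerivAt_comp_lineMap_of_differentiableAt {x y : E} {t : ℝ}
    (hJ : DifferentiableAt ℝ J (AffineMap.lineMap x y t)) :
    HasDerivAt (fun s : ℝ ↦ J (AffineMap.lineMap x y s))
      ⟪∇ J (AffineMap.lineMap x y t), y - x⟫ t :=
  hJ.hasGradientAt.hasFDerivAt.comp_hasDerivAt t AffineMap.hasDerivAt_lineMap

theorem quadratic_le_of_le_inner_gradient_sub {x y : E} {c : ℝ}
    (hdiff : ∀ z ∈ segment ℝ x y, DifferentiableAt ℝ J z)
    (hgrad : ∀ z ∈ segment ℝ x y, c * ‖z - x‖ ^ 2 ≤ ⟪∇ J z - ∇ J x, z - x⟫) :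
    J x + ⟪∇ J x, y - x⟫ + c / 2 * ‖y - x‖ ^ 2 ≤ J y := by
  let p : ℝ → E := AffineMap.lineMap x y
  have hp_mem {t : ℝ} (ht : t ∈ Icc 0 1) : p t ∈ segment ℝ x y :=
    segment_eq_image_lineMap ℝ x y ▸ mem_image_of_mem p ht
  have hderiv {t : ℝ} (ht : t ∈ Icc 0 1) :
      HasDerivAt (fun s ↦ J (p s)) ⟪∇ J (p t), y - x⟫ t :=
    hasDerivAt_comp_lineMap_of_differentiableAt (hdiff _ (hp_mem ht))
  have hslope {t : ℝ} (ht : t ∈ Icc 0 1) :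
      ⟪∇ J x, y - x⟫ + c * ‖y - x‖ ^ 2 * (t - 0) ≤ ⟪∇ J (p t), y - x⟫ := by
    rcases ht.1.eq_or_lt with rfl | htpos
    · simp [p]
    have hsub : p t - x = t • (y - x) := AffineMap.lineMap_vsub_left x y t
    have hgrad_t := hgrad (p t) (hp_mem ht)
    rw [hsub, norm_smul, Real.norm_of_nonneg htpos.le, inner_smul_right, inner_sub_left] at hgrad_t
    refine le_of_mul_le_mul_left ?_ htpos
    linarith
  have hquad := quadratic_le_of_affine_le_deriv_right zero_le_one
    (fun t ht ↦ (hderiv ht).continuousAt.continuousWithinAt)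
    (fun t ht ↦ (hderiv (Ico_subset_Icc_self ht)).hasDerivWithinAt)
    (fun t ht ↦ hslope (Ico_subset_Icc_self ht))
  simp only [p, AffineMap.lineMap_apply_zero, AffineMap.lineMap_apply_one] at hquad
  linarith

theorem inexact_gradient_step_lower_bound {θ v : E} {L η : ℝ}
    (hdiff : ∀ z ∈ segment ℝ θ (θ + η • v), DifferentiableAt ℝ J z)
    (hgrad : ∀ z ∈ segment ℝ θ (θ + η • v), -L * ‖z - θ‖ ^ 2 ≤ ⟪∇ J z - ∇ J θ, z - θ⟫) :
    J θ + η / 2 * (‖∇ J θ‖ ^ 2 + ‖v‖ ^ 2 - ‖∇ J θ - v‖ ^ 2) - L / 2 * ‖η • v‖ ^ 2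
      ≤ J (θ + η • v) := by
  have hquad := quadratic_le_of_le_inner_gradient_sub hdiff hgrad
  rw [add_sub_cancel_left, inner_smul_right] at hquad
  have hpolar := norm_sub_sq_real (∇ J θ) v
  calc J θ + η / 2 * (‖∇ J θ‖ ^ 2 + ‖v‖ ^ 2 - ‖∇ J θ - v‖ ^ 2) - L / 2 * ‖η • v‖ ^ 2
      = J θ + η * ⟪∇ J θ, v⟫ + -L / 2 * ‖η • v‖ ^ 2 := by rw [hpolar]; ring
    _ ≤ J (θ + η • v) := hquad

theorem svrpg_one_step_ascent_general {θ v : E} {L η : ℝ} (hη : 0 < η)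
    (hdiff : ∀ z ∈ segment ℝ θ (θ + η • v), DifferentiableAt ℝ J z)
    (hgrad : ∀ z ∈ segment ℝ θ (θ + η • v), -L * ‖z - θ‖ ^ 2 ≤ ⟪∇ J z - ∇ J θ, z - θ⟫) :
    J (θ + η • v) ≥ J θ - (3 * η / 4) * ‖∇ J θ - v‖ ^ 2
      + (1 / (4 * η) - L / 2) * ‖(θ + η • v) - θ‖ ^ 2
      + (η / 8) * ‖∇ J θ‖ ^ 2 := by
  have hstep := inexact_gradient_step_lower_bound hdiff hgrad
  have hnorm : 1 / (4 * η) * ‖η • v‖ ^ 2 = η / 4 * ‖v‖ ^ 2 := by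
    rw [norm_smul, Real.norm_of_nonneg hη.le]
    field_simp
  rw [add_sub_cancel_left, sub_mul, hnorm]
  have hg : 0 ≤ η * ‖∇ J θ‖ ^ 2 := by positivity
  have hv : 0 ≤ η * ‖v‖ ^ 2 := by positivity
  have herr : 0 ≤ η * ‖∇ J θ - v‖ ^ 2 := by positivity
  linarith

end

/-- One-step ascent inequality for an `L`-smooth performance function `J` under an
inexact gradient step `θ' = θ + η • v`. -/
theorem svrpg_one_step_ascent {d : ℕ} (L η : ℝ) (hL : 0 < L) (hη : 0 < η)
    (J : EuclideanSpace ℝ (Fin d) → ℝ)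
    (hdiff : Differentiable ℝ J)
    (hlip : ∀ x y : EuclideanSpace ℝ (Fin d),
      ‖gradient J x - gradient J y‖ ≤ L * ‖x - y‖)
    (θ v : EuclideanSpace ℝ (Fin d)) :
    J (θ + η • v) ≥ J θ - (3 * η / 4) * ‖gradient J θ - v‖ ^ 2
      + (1 / (4 * η) - L / 2) * ‖(θ + η • v) - θ‖ ^ 2
      + (η / 8) * ‖gradient J θ‖ ^ 2 :=
  svrpg_one_step_ascent_general hη (fun z _ ↦ hdiff z)
    fun z _ ↦ neg_mul_norm_sq_le_inner_of_norm_le (hlip z θ)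
end

section
/- Let d ∈ ℕ, L > 0, and let J : ℝ^d → ℝ be differentiable with L-Lipschitz gradient. Let C ≥ 0, e ≥ 0, B > 0, m ≥ 1 an integer, and let the step size satisfy 0 < η ≤ 1/(4L) and the batch parameters satisfy B/m² ≥ 3C/(2L²). Suppose θ_0, θ_1, …, θ_m ∈ ℝ^d and v_0, …, v_{m−1} ∈ ℝ^d satisfy θ_{t+1} = θ_t + η v_t for all 0 ≤ t ≤ m−1, and the gradient-estimation error bound ‖∇J(θ_t) − v_t‖₂² ≤ e + (C/B)‖θ_t − θ_0‖₂² holds for all 0 ≤ t ≤ m−1. Then J(θ_m) ≥ J(θ_0) + (η/8)·Σ_{t=0}^{m−1} ‖∇J(θ_t)‖₂² − (3mη/4)·e. -/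
/-!
Polarization turns the quadratic lower bound for `J` at `θ_{t+1} = θ_t + η • v_t` into a gain
`η / 2 * (‖∇J(θ_t)‖² + (1 - L η) ‖v_t‖² - ‖∇J(θ_t) - v_t‖²)`. Since `θ_t - θ_0` is a sum of fewer
than `m` steps, Cauchy-Schwarz bounds the total drift `∑ ‖θ_t - θ_0‖²` by `(m η)² ∑ ‖v_t‖²`. Hence
the drift part of the error, with coefficient `κ = C / B`, is absorbed by the terms
`(1 - L η) ‖v_t‖²` as soon as `L η + κ (m η)² ≤ 1`; the step-size and batch-size conditions give
`L η ≤ 1 / 4` and `κ (m η)² ≤ 1 / 24`.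
-/

open Finset

section Drift

variable {E : Type*} [SeminormedAddCommGroup E]

lemma norm_sub_zero_sq_le_mul_sum_norm_sub_sq (θ : ℕ → E) (t : ℕ) :
    ‖θ t - θ 0‖ ^ 2 ≤ t * ∑ s ∈ range t, ‖θ (s + 1) - θ s‖ ^ 2 :=
  calc ‖θ t - θ 0‖ ^ 2 = ‖∑ s ∈ range t, (θ (s + 1) - θ s)‖ ^ 2 := by rw [sum_range_sub]
    _ ≤ (∑ s ∈ range t, ‖θ (s + 1) - θ s‖) ^ 2 := by gcongr; exact norm_sum_le _ _
    _ ≤ t * ∑ s ∈ range t, ‖θ (s + 1) - θ s‖ ^ 2 := by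
      simpa only [card_range] using
        sq_sum_le_card_mul_sum_sq (s := range t) (f := fun s => ‖θ (s + 1) - θ s‖)

lemma sum_norm_sub_zero_sq_le_sq_mul_sum_norm_sub_sq (θ : ℕ → E) (m : ℕ) :
    ∑ t ∈ range m, ‖θ t - θ 0‖ ^ 2 ≤ (m : ℝ) ^ 2 * ∑ t ∈ range m, ‖θ (t + 1) - θ t‖ ^ 2 := by
  have drift_le : ∀ t ∈ range m,
      ‖θ t - θ 0‖ ^ 2 ≤ m * ∑ s ∈ range m, ‖θ (s + 1) - θ s‖ ^ 2 := fun t ht => by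
    have htm : t ≤ m := (mem_range.1 ht).le
    refine (norm_sub_zero_sq_le_mul_sum_norm_sub_sq θ t).trans ?_
    gcongr
  calc ∑ t ∈ range m, ‖θ t - θ 0‖ ^ 2
      ≤ #(range m) • (m * ∑ s ∈ range m, ‖θ (s + 1) - θ s‖ ^ 2) := sum_le_card_nsmul _ _ _ drift_le
    _ = (m : ℝ) ^ 2 * ∑ t ∈ range m, ‖θ (t + 1) - θ t‖ ^ 2 := by
      rw [card_range, nsmul_eq_mul, sq, mul_assoc]

lemma sum_error_le_of_error_le_add_drift [NormedSpace ℝ E] {θ v : ℕ → E} {ε : ℕ → ℝ}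
    {e κ η : ℝ} {m : ℕ} (hκ : 0 ≤ κ) (hstep : ∀ t < m, θ (t + 1) = θ t + η • v t)
    (hε : ∀ t < m, ε t ≤ e + κ * ‖θ t - θ 0‖ ^ 2) :
    ∑ t ∈ range m, ε t ≤ m * e + κ * (m * η) ^ 2 * ∑ t ∈ range m, ‖v t‖ ^ 2 := by
  have sum_step_sq : ∑ t ∈ range m, ‖θ (t + 1) - θ t‖ ^ 2 = η ^ 2 * ∑ t ∈ range m, ‖v t‖ ^ 2 := by
    rw [mul_sum]
    refine sum_congr rfl fun t ht => ?_
    rw [hstep t (mem_range.1 ht), add_sub_cancel_left, norm_smul, mul_pow, Real.norm_eq_abs, sq_abs]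
  calc ∑ t ∈ range m, ε t ≤ ∑ t ∈ range m, (e + κ * ‖θ t - θ 0‖ ^ 2) :=
        sum_le_sum fun t ht => hε t (mem_range.1 ht)
    _ = m * e + κ * ∑ t ∈ range m, ‖θ t - θ 0‖ ^ 2 := by
      rw [sum_add_distrib, sum_const, card_range, nsmul_eq_mul, mul_sum]
    _ ≤ m * e + κ * ((m : ℝ) ^ 2 * ∑ t ∈ range m, ‖θ (t + 1) - θ t‖ ^ 2) := by
      gcongr
      exact sum_norm_sub_zero_sq_le_sq_mul_sum_norm_sub_sq θ m
    _ = m * e + κ * (m * η) ^ 2 * ∑ t ∈ range m, ‖v t‖ ^ 2 := by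
      rw [sum_step_sq]
      ring

end Drift

lemma norm_add_sub_sub_apply_le_of_hasFDerivAt {E F : Type*} [NormedAddCommGroup E]
    [NormedSpace ℝ E] [NormedAddCommGroup F] [NormedSpace ℝ F] {f : E → F} {f' : E → E →L[ℝ] F}
    {L : ℝ} {x : E} (hf : ∀ y, HasFDerivAt f (f' y) y)
    (hlip : ∀ y, ‖f' y - f' x‖ ≤ L * ‖y - x‖) (u : E) :
    ‖f (x + u) - f x - f' x u‖ ≤ L / 2 * ‖u‖ ^ 2 := by
  let r : ℝ → F := fun s => f (x + s • u) - f x - s • f' x u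
  have hasDerivAt_r (s : ℝ) : HasDerivAt r ((f' (x + s • u) - f' x) u) s := by
    have hline : HasDerivAt (fun s : ℝ => x + s • u) u s := by
      simpa only [one_smul] using ((hasDerivAt_id' s).smul_const u).const_add x
    simpa only [one_smul] using!
      (((hf _).comp_hasDerivAt s hline).sub_const (f x)).sub
        ((hasDerivAt_id' s).smul_const (f' x u))
  have hasDerivAt_bound (s : ℝ) :
      HasDerivAt (fun s => L / 2 * ‖u‖ ^ 2 * s ^ 2) (L * ‖u‖ ^ 2 * s) s :=
    ((hasDerivAt_pow 2 s).const_mul (L / 2 * ‖u‖ ^ 2)).congr_deriv (by push_cast; ring)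
  have norm_deriv_le : ∀ s ∈ Set.Ico (0 : ℝ) 1,
      ‖(f' (x + s • u) - f' x) u‖ ≤ L * ‖u‖ ^ 2 * s := fun s hs =>
    calc ‖(f' (x + s • u) - f' x) u‖ ≤ L * ‖x + s • u - x‖ * ‖u‖ :=
          ContinuousLinearMap.le_of_opNorm_le _ (hlip _) u
      _ = L * ‖u‖ ^ 2 * s := by
        rw [add_sub_cancel_left, norm_smul, Real.norm_of_nonneg hs.1]
        ring
  have norm_r_one_le := image_norm_le_of_norm_deriv_right_le_deriv_boundary
    (fun s _ => (hasDerivAt_r s).continuousAt.continuousWithinAt)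
    (fun s _ => (hasDerivAt_r s).hasDerivWithinAt) (by simp [r]) hasDerivAt_bound norm_deriv_le
    (Set.right_mem_Icc.2 zero_le_one)
  simpa only [r, one_smul, one_pow, mul_one] using norm_r_one_le

section Ascent

variable {E : Type*} [NormedAddCommGroup E] [InnerProductSpace ℝ E] [CompleteSpace E]
  {J : E → ℝ} {L : ℝ}

lemma abs_add_sub_sub_inner_gradient_le (hdiff : Differentiable ℝ J) {x : E}
    (hlip : ∀ y, ‖gradient J y - gradient J x‖ ≤ L * ‖y - x‖) (u : E) :
    |J (x + u) - J x - inner ℝ (gradient J x) u| ≤ L / 2 * ‖u‖ ^ 2 := by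
  refine norm_add_sub_sub_apply_le_of_hasFDerivAt
    (fun y => (hdiff y).hasGradientAt.hasFDerivAt) (fun y => ?_) u
  rw [← map_sub, LinearIsometryEquiv.norm_map]
  exact hlip y

lemma inexact_gradient_step_ascent (hdiff : Differentiable ℝ J) {x : E}
    (hlip : ∀ y, ‖gradient J y - gradient J x‖ ≤ L * ‖y - x‖) (η : ℝ) (v : E) :
    J x + η / 2 * (‖gradient J x‖ ^ 2 + (1 - L * η) * ‖v‖ ^ 2 - ‖gradient J x - v‖ ^ 2)
      ≤ J (x + η • v) := by
  have taylor := neg_le_of_abs_le (abs_add_sub_sub_inner_gradient_le hdiff hlip (η • v))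
  rw [real_inner_smul_right, norm_smul, mul_pow, Real.norm_eq_abs, sq_abs] at taylor
  rw [norm_sub_sq_real]
  linarith

lemma inexact_gradient_ascent_sum (hdiff : Differentiable ℝ J)
    (hlip : ∀ x y, ‖gradient J x - gradient J y‖ ≤ L * ‖x - y‖) {θ v : ℕ → E} {η : ℝ} {m : ℕ}
    (hstep : ∀ t < m, θ (t + 1) = θ t + η • v t) :
    J (θ 0) + η / 2 * (∑ t ∈ range m, ‖gradient J (θ t)‖ ^ 2
        + (1 - L * η) * ∑ t ∈ range m, ‖v t‖ ^ 2
        - ∑ t ∈ range m, ‖gradient J (θ t) - v t‖ ^ 2) ≤ J (θ m) := by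
  rw [← le_sub_iff_add_le', ← sum_range_sub (fun t => J (θ t)), mul_sum, ← sum_add_distrib,
    ← sum_sub_distrib, mul_sum]
  refine sum_le_sum fun t ht => ?_
  rw [hstep t (mem_range.1 ht), le_sub_iff_add_le']
  exact inexact_gradient_step_ascent hdiff (hlip · (θ t)) η (v t)

theorem svrpg_single_epoch_general {κ e η : ℝ} {m : ℕ} (hκ : 0 ≤ κ) (hη : 0 ≤ η)
    (hLκη : L * η + κ * (m * η) ^ 2 ≤ 1) (hdiff : Differentiable ℝ J)
    (hlip : ∀ x y, ‖gradient J x - gradient J y‖ ≤ L * ‖x - y‖) {θ v : ℕ → E}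
    (hstep : ∀ t < m, θ (t + 1) = θ t + η • v t)
    (herr : ∀ t < m, ‖gradient J (θ t) - v t‖ ^ 2 ≤ e + κ * ‖θ t - θ 0‖ ^ 2) :
    J (θ 0) + η / 2 * (∑ t ∈ range m, ‖gradient J (θ t)‖ ^ 2 - m * e) ≤ J (θ m) := by
  refine le_trans ?_ (inexact_gradient_ascent_sum hdiff hlip hstep)
  have sum_err_le := sum_error_le_of_error_le_add_drift hκ hstep herr
  have drift_absorbed : κ * (m * η) ^ 2 * ∑ t ∈ range m, ‖v t‖ ^ 2
      ≤ (1 - L * η) * ∑ t ∈ range m, ‖v t‖ ^ 2 := by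
    gcongr
    linarith
  gcongr J (θ 0) + η / 2 * ?_
  linarith

end Ascent

lemma mul_add_div_mul_sq_le_one_of_batch_size {L C B η : ℝ} {m : ℕ} (hL : 0 < L) (hB : 0 < B)
    (hm : 1 ≤ m) (hη : 0 ≤ η) (hηL : η ≤ 1 / (4 * L))
    (hBm : 3 * C / (2 * L ^ 2) ≤ B / (m : ℝ) ^ 2) :
    L * η + C / B * (m * η) ^ 2 ≤ 1 := by
  have hLη : L * η ≤ 1 / 4 := by
    rw [le_div_iff₀ (by positivity)] at hηL
    linarith
  have hCBm : C / B * (m : ℝ) ^ 2 ≤ 2 / 3 * L ^ 2 := by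
    rw [div_le_div_iff₀ (by positivity) (by positivity)] at hBm
    rw [div_mul_eq_mul_div, div_le_iff₀ hB]
    linarith
  calc L * η + C / B * (m * η) ^ 2 = L * η + C / B * (m : ℝ) ^ 2 * η ^ 2 := by ring
    _ ≤ L * η + 2 / 3 * L ^ 2 * η ^ 2 := by gcongr
    _ = L * η + 2 / 3 * (L * η) ^ 2 := by ring
    _ ≤ 1 / 4 + 2 / 3 * (1 / 4) ^ 2 := by gcongr
    _ ≤ 1 := by norm_num

/-- Single-epoch analysis of SVRPG: within one epoch of length `m`, inexact gradient
ascent steps `θ_{t+1} = θ_t + η • v_t` whose squared gradient-estimation error is bounded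
by `e + (C/B) * ‖θ_t - θ_0‖²` yield the stated ascent guarantee. -/
theorem svrpg_single_epoch {d : ℕ} (L C e B η : ℝ) (m : ℕ)
    (hL : 0 < L) (hC : 0 ≤ C) (he : 0 ≤ e) (hB : 0 < B) (hm : 1 ≤ m)
    (hη : 0 < η) (hηL : η ≤ 1 / (4 * L))
    (hBm : B / (m : ℝ) ^ 2 ≥ 3 * C / (2 * L ^ 2))
    (J : EuclideanSpace ℝ (Fin d) → ℝ)
    (hdiff : Differentiable ℝ J)
    (hlip : ∀ x y : EuclideanSpace ℝ (Fin d),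
      ‖gradient J x - gradient J y‖ ≤ L * ‖x - y‖)
    (θ v : ℕ → EuclideanSpace ℝ (Fin d))
    (hstep : ∀ t < m, θ (t + 1) = θ t + η • v t)
    (herr : ∀ t < m, ‖gradient J (θ t) - v t‖ ^ 2 ≤ e + (C / B) * ‖θ t - θ 0‖ ^ 2) :
    J (θ m) ≥ J (θ 0) + (η / 8) * ∑ t ∈ Finset.range m, ‖gradient J (θ t)‖ ^ 2
      - (3 * (m : ℝ) * η / 4) * e := by
  have ascent := svrpg_single_epoch_general (div_nonneg hC hB.le) hη.le
    (mul_add_div_mul_sq_le_one_of_batch_size hL hB hm hη.le hηL hBm) hdiff hlip hstep herr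
  have sum_grad_nonneg : 0 ≤ η * ∑ t ∈ range m, ‖gradient J (θ t)‖ ^ 2 := by positivity
  have error_nonneg : 0 ≤ η * (m * e) := by positivity
  linarith
end

section
/- For all Δ > 0, σ > 0 and η > 0 there exists a constant c > 0 such that for every ε ∈ (0, 1], setting N = ⌈12σ²/ε⌉, B = ⌈ε^{−2/3}⌉, m = ⌈√B⌉ and S = ⌈16Δ/(η ε m)⌉, the total number of sampled trajectories satisfies S·N + S·m·B ≤ c·ε^{−5/3}. Moreover, with these choices, 8Δ/(η S m) + 6σ²/ N ≤ ε. -/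
/-!
The inner rounding in `⌈√⌈y⌉⌉` has no effect, so `m = ⌈ε^(-1/3)⌉`. Each epoch then costs
`N + m·B`, where both `N` and `m·B` are of order `ε⁻¹` (this balance is what singles out the batch
size `B ≈ ε^(-2/3)`), and there are `S ≈ 1/(ε·m) ≈ ε^(-2/3)` epochs, whence the exponent `-5/3`.
For the accuracy, `S` and `N` are chosen so that each of the two error terms is at most `ε/2`.
-/

lemma natCeil_mul_le_add_one_mul {R : Type*} [Semiring R] [LinearOrder R] [IsStrictOrderedRing R]
    [FloorSemiring R] {a x : R} (ha : 0 ≤ a) (hx : 1 ≤ x) :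
    (⌈a * x⌉₊ : R) ≤ (a + 1) * x :=
  calc (⌈a * x⌉₊ : R)
      ≤ a * x + 1 := (Nat.ceil_lt_add_one (mul_nonneg ha (zero_le_one.trans hx))).le
    _ ≤ a * x + x := by gcongr
    _ = (a + 1) * x := by rw [add_mul, one_mul]

lemma natCeil_sqrt_natCeil (y : ℝ) : ⌈√(⌈y⌉₊ : ℝ)⌉₊ = ⌈√y⌉₊ := by
  refine eq_of_forall_ge_iff fun n => ?_
  rw [Nat.ceil_le, Nat.ceil_le, Real.sqrt_le_left n.cast_nonneg, Real.sqrt_le_left n.cast_nonneg]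
  exact_mod_cast Nat.ceil_le

section Rpow

variable {ε p q : ℝ}

lemma natCeil_sqrt_natCeil_rpow (hε : 0 ≤ ε) :
    ⌈√(⌈ε ^ p⌉₊ : ℝ)⌉₊ = ⌈ε ^ (p / 2)⌉₊ := by
  rw [natCeil_sqrt_natCeil, Real.sqrt_eq_rpow, ← Real.rpow_mul hε, mul_one_div]

lemma natCeil_mul_rpow_le_add_one_mul {a : ℝ} (ha : 0 ≤ a) (hε : 0 < ε) (hε1 : ε ≤ 1)
    (hp : p ≤ 0) : (⌈a * ε ^ p⌉₊ : ℝ) ≤ (a + 1) * ε ^ p :=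
  natCeil_mul_le_add_one_mul ha (Real.one_le_rpow_of_pos_of_le_one_of_nonpos hε hε1 hp)

lemma natCeil_rpow_le_two_mul_rpow (hε : 0 < ε) (hε1 : ε ≤ 1) (hp : p ≤ 0) :
    (⌈ε ^ p⌉₊ : ℝ) ≤ 2 * ε ^ p := by
  simpa [one_add_one_eq_two] using natCeil_mul_rpow_le_add_one_mul zero_le_one hε hε1 hp

lemma natCeil_rpow_mul_natCeil_rpow_le (hε : 0 < ε) (hε1 : ε ≤ 1) (hp : p ≤ 0)
    (hq : q ≤ 0) : (⌈ε ^ p⌉₊ : ℝ) * ⌈ε ^ q⌉₊ ≤ 4 * ε ^ (p + q) :=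
  calc (⌈ε ^ p⌉₊ : ℝ) * ⌈ε ^ q⌉₊
      ≤ (2 * ε ^ p) * (2 * ε ^ q) := by
        gcongr
        · exact natCeil_rpow_le_two_mul_rpow hε hε1 hp
        · exact natCeil_rpow_le_two_mul_rpow hε hε1 hq
    _ = 4 * ε ^ (p + q) := by rw [Real.rpow_add hε]; ring

lemma natCeil_div_mul_le_of_rpow_le {K m : ℝ} (hK : 0 ≤ K) (hε : 0 < ε) (hε1 : ε ≤ 1)
    (hp : -1 ≤ p) (hm : ε ^ p ≤ m) : (⌈K / (ε * m)⌉₊ : ℝ) ≤ (K + 1) * ε ^ (-1 - p) := by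
  have hdiv : K / (ε * m) ≤ K * ε ^ (-1 - p) :=
    calc K / (ε * m) ≤ K / (ε * ε ^ p) := by gcongr
      _ = K * ε ^ (-1 - p) := by rw [Real.rpow_sub hε, Real.rpow_neg_one]; field_simp
  calc (⌈K / (ε * m)⌉₊ : ℝ) ≤ ⌈K * ε ^ (-1 - p)⌉₊ := by gcongr
    _ ≤ (K + 1) * ε ^ (-1 - p) := natCeil_mul_rpow_le_add_one_mul hK hε hε1 (by linarith)

lemma mul_add_le_mul_rpow_add {a b c x y z : ℝ} (ha : 0 ≤ a) (hε : 0 < ε) (hyz : 0 ≤ y + z)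
    (hx : x ≤ a * ε ^ p) (hy : y ≤ b * ε ^ q) (hz : z ≤ c * ε ^ q) :
    x * (y + z) ≤ a * (b + c) * ε ^ (p + q) :=
  calc x * (y + z) ≤ (a * ε ^ p) * (b * ε ^ q + c * ε ^ q) := by gcongr
    _ = a * (b + c) * ε ^ (p + q) := by rw [Real.rpow_add hε]; ring

end Rpow

lemma optimalityGap_add_variance_le {Δ σ η ε N m S : ℝ} (hη : 0 < η) (hε : 0 < ε) (hm : 0 < m)
    (hS : 0 ≤ S) (hN_ge : 12 * σ ^ 2 / ε ≤ N) (hS_ge : 16 * Δ / (η * ε * m) ≤ S) :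
    8 * Δ / (η * S * m) + 6 * σ ^ 2 / N ≤ ε := by
  have hgap : 8 * Δ / (η * S * m) ≤ ε / 2 := by
    rw [div_le_iff₀ (by positivity)] at hS_ge
    exact div_le_of_le_mul₀ (by positivity) (by positivity) (by linarith)
  have hvar : 6 * σ ^ 2 / N ≤ ε / 2 := by
    have hN : 0 ≤ N := le_trans (by positivity) hN_ge
    rw [div_le_iff₀ hε] at hN_ge
    exact div_le_of_le_mul₀ hN (by positivity) (by linarith)
  linarith

/-- Sample-complexity corollary for SVRPG: with `N = ⌈12σ²/ε⌉`, `B = ⌈ε^{-2/3}⌉`,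
`m = ⌈√B⌉` and `S = ⌈16Δ/(ηεm)⌉`, the total trajectory count `S·N + S·m·B` is
`O(ε^{-5/3})`, and moreover `8Δ/(ηSm) + 6σ²/N ≤ ε`. -/
theorem svrpg_sample_complexity (Δ σ η : ℝ) (hΔ : 0 < Δ) (hσ : 0 < σ) (hη : 0 < η) :
    ∃ c : ℝ, 0 < c ∧ ∀ ε : ℝ, ε ∈ Set.Ioc (0 : ℝ) 1 →
      ∀ N B m S : ℕ,
        N = ⌈12 * σ ^ 2 / ε⌉₊ →
        B = ⌈ε ^ (-(2 : ℝ) / 3)⌉₊ →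
        m = ⌈Real.sqrt (B : ℝ)⌉₊ →
        S = ⌈16 * Δ / (η * ε * (m : ℝ))⌉₊ →
        ((S * N + S * m * B : ℕ) : ℝ) ≤ c * ε ^ (-(5 : ℝ) / 3) ∧
        8 * Δ / (η * (S : ℝ) * (m : ℝ)) + 6 * σ ^ 2 / (N : ℝ) ≤ ε := by
  refine ⟨(16 * Δ / η + 1) * (12 * σ ^ 2 + 1 + 4), by positivity, ?_⟩
  rintro ε ⟨hε, hε1⟩ N B m S hN hB hm hS
  have hm_eq : m = ⌈ε ^ (-(1 : ℝ) / 3)⌉₊ := by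
    rw [hm, hB, natCeil_sqrt_natCeil_rpow hε.le]; norm_num
  have hm_ge : ε ^ (-(1 : ℝ) / 3) ≤ m := hm_eq ▸ Nat.le_ceil _
  have hN_le : (N : ℝ) ≤ (12 * σ ^ 2 + 1) * ε ^ (-1 : ℝ) := by
    rw [hN, div_eq_mul_inv, ← Real.rpow_neg_one]
    exact natCeil_mul_rpow_le_add_one_mul (by positivity) hε hε1 (by norm_num)
  have hmB_le : (m : ℝ) * B ≤ 4 * ε ^ (-1 : ℝ) := by
    rw [hm_eq, hB]
    exact (natCeil_rpow_mul_natCeil_rpow_le hε hε1 (by norm_num) (by norm_num)).trans_eq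
      (by norm_num)
  have hS_le : (S : ℝ) ≤ (16 * Δ / η + 1) * ε ^ (-(2 : ℝ) / 3) := by
    rw [hS, mul_assoc, ← div_div]
    exact (natCeil_div_mul_le_of_rpow_le (by positivity) hε hε1 (by norm_num) hm_ge).trans_eq
      (by norm_num)
  constructor
  · calc ((S * N + S * m * B : ℕ) : ℝ) = S * (N + m * B) := by push_cast; ring
      _ ≤ (16 * Δ / η + 1) * (12 * σ ^ 2 + 1 + 4) * ε ^ (-(2 : ℝ) / 3 + -1) :=
        mul_add_le_mul_rpow_add (by positivity) hε (by positivity) hS_le hN_le hmB_le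
      _ = _ := by norm_num
  · exact optimalityGap_add_variance_le hη hε ((Real.rpow_pos_of_pos hε _).trans_le hm_ge)
      S.cast_nonneg (hN ▸ Nat.le_ceil _) (hS ▸ Nat.le_ceil _)
end

section
/- Let (T, 𝒯, μ) be a measure space, d ∈ ℕ, and let p : ℝ^d × T → (0, ∞) be a family of strictly positive probability densities: for each θ, p(θ, ·) is measurable with ∫_T p(θ, τ) dμ(τ) = 1. Fix θ₁, θ₂ ∈ ℝ^d and constants G' ≥ 0, M' ≥ 0, W ≥ 0. Assume: (i) for each τ, the map θ ↦ p(θ, τ) is twice differentiable, with ‖∇_θ log p(θ, τ)‖₂ ≤ G' and ‖∇²_θ log p(θ, τ)‖_op ≤ M' for all θ on the segment joining θ₂ and θ₁; (ii) the function D(θ) := ∫_T p(θ, τ)²/p(θ₂, τ) dμ(τ) is finite and twice continuously differentiable on this segment, with its gradient and Hessian obtained by differentiating under the integral sign, and also ∫_T ∇_θ p(θ, τ)|_{θ=θ₂} dμ(τ) = 0; (iii) D(θ) ≤ W + 1 for all θ on the segment. Then the importance weight ω(τ) := p(θ₁, τ)/p(θ₂, τ), viewed as a random variable under the probability measure with density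 p(θ₂, ·) with respect to μ, satisfies Var(ω) = D(θ₁) − 1 ≤ (2G'² + M')(W + 1)·‖θ₁ − θ₂‖₂². -/
open MeasureTheory

/-!
The second moment `D` satisfies `D θ₂ = 1`, and its derivative at `θ₂` is twice the integral of the
derivative of the density, hence zero. A function `f > 0` satisfies `∇²f = f (∇ℓ ⊗ ∇ℓ + ∇²ℓ)` with
`ℓ = log f`; for `f = p² / c` one has `∇ℓ = 2 ∇ log p` and `∇²ℓ = 2 ∇² log p`, so the Hessian of
`f` is at most `(4 G² + 2 M) f`. Integrating, the Hessian of `D` is at most `(4 G² + 2 M) (W + 1)`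
on the segment, and Taylor's formula at `θ₂` gives half of this times the squared distance.
-/

theorem norm_iteratedFDeriv_two {𝕜 E F : Type*} [NontriviallyNormedField 𝕜]
    [NormedAddCommGroup E] [NormedSpace 𝕜 E] [NormedAddCommGroup F] [NormedSpace 𝕜 F]
    (f : E → F) (x : E) :
    ‖iteratedFDeriv 𝕜 2 f x‖ = ‖fderiv 𝕜 (fderiv 𝕜 f) x‖ := by
  rw [← norm_iteratedFDeriv_fderiv, norm_iteratedFDeriv_one]

section Taylor

variable {E F : Type*} [NormedAddCommGroup E] [NormedSpace ℝ E]
  [NormedAddCommGroup F] [NormedSpace ℝ F] {f : E → F} {x y : E} {K : ℝ}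

theorem norm_sub_sub_fderiv_apply_le_of_norm_fderiv_sub_le
    (hf : ∀ z ∈ segment ℝ x y, DifferentiableAt ℝ f z)
    (hf' : ∀ z ∈ segment ℝ x y, ‖fderiv ℝ f z - fderiv ℝ f x‖ ≤ K * ‖z - x‖) :
    ‖f y - f x - fderiv ℝ f x (y - x)‖ ≤ K / 2 * ‖y - x‖ ^ 2 := by
  set v := y - x
  have hmem : ∀ t ∈ Set.Icc (0 : ℝ) 1, x + t • v ∈ segment ℝ x y := fun t ht => by
    rw [segment_eq_image']
    exact ⟨t, ht, rfl⟩
  have hline (t : ℝ) : HasDerivAt (fun s : ℝ => x + s • v) v t := by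
    simpa using ((hasDerivAt_id t).smul_const v).const_add x
  have hremainder : ∀ t ∈ Set.Icc (0 : ℝ) 1,
      HasDerivAt (fun s : ℝ => f (x + s • v) - f x - s • fderiv ℝ f x v)
        (fderiv ℝ f (x + t • v) v - fderiv ℝ f x v) t := fun t ht => by
    have hcomp := (hf _ (hmem t ht)).hasFDerivAt.comp_hasDerivAt t (hline t)
    simpa using! (hcomp.sub_const (f x)).sub ((hasDerivAt_id t).smul_const (fderiv ℝ f x v))
  have hparabola (t : ℝ) :
      HasDerivAt (fun s : ℝ => K / 2 * ‖v‖ ^ 2 * s ^ 2) (K * ‖v‖ ^ 2 * t) t :=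
    ((hasDerivAt_pow 2 t).const_mul _).congr_deriv (by norm_num; ring)
  have hbound : ∀ t ∈ Set.Ico (0 : ℝ) 1,
      ‖fderiv ℝ f (x + t • v) v - fderiv ℝ f x v‖ ≤ K * ‖v‖ ^ 2 * t := fun t ht =>
    calc ‖fderiv ℝ f (x + t • v) v - fderiv ℝ f x v‖
        ≤ ‖fderiv ℝ f (x + t • v) - fderiv ℝ f x‖ * ‖v‖ :=
          (fderiv ℝ f (x + t • v) - fderiv ℝ f x).le_opNorm v
      _ ≤ K * ‖x + t • v - x‖ * ‖v‖ := by
          gcongr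
          exact hf' _ (hmem t (Set.Ico_subset_Icc_self ht))
      _ = K * ‖v‖ ^ 2 * t := by
          rw [add_sub_cancel_left, norm_smul, Real.norm_of_nonneg ht.1]
          ring
  simpa [v] using image_norm_le_of_norm_deriv_right_le_deriv_boundary
    (fun t ht => (hremainder t ht).continuousAt.continuousWithinAt)
    (fun t ht => (hremainder t (Set.Ico_subset_Icc_self ht)).hasDerivWithinAt)
    (by simp) hparabola hbound (Set.right_mem_Icc.2 zero_le_one)

theorem norm_sub_sub_fderiv_apply_le_of_norm_iteratedFDeriv_two_le
    (hf : ∀ z ∈ segment ℝ x y, ContDiffAt ℝ 2 f z)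
    (hK : ∀ z ∈ segment ℝ x y, ‖iteratedFDeriv ℝ 2 f z‖ ≤ K) :
    ‖f y - f x - fderiv ℝ f x (y - x)‖ ≤ K / 2 * ‖y - x‖ ^ 2 := by
  refine norm_sub_sub_fderiv_apply_le_of_norm_fderiv_sub_le
    (fun z hz => (hf z hz).differentiableAt two_ne_zero) fun z hz => ?_
  refine (convex_segment x y).norm_image_sub_le_of_norm_fderiv_le (𝕜 := ℝ) (fun w hw => ?_)
    (fun w hw => ?_) (left_mem_segment ℝ x y) hz
  · exact ((hf w hw).fderiv_right (m := 1) (by norm_num)).differentiableAt one_ne_zero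
  · rw [← norm_iteratedFDeriv_two]
    exact hK w hw

end Taylor

section LogDerivative

open Filter Topology

set_option maxSynthPendingDepth 3

variable {E : Type*} [NormedAddCommGroup E] [NormedSpace ℝ E] {f q : E → ℝ} {c : ℝ} {x : E}

theorem fderiv_eq_smul_fderiv_log (hf : DifferentiableAt ℝ f x) (hx : f x ≠ 0) :
    fderiv ℝ f x = f x • fderiv ℝ (fun z => Real.log (f z)) x := by
  rw [fderiv.log hf hx, smul_inv_smul₀ hx]

theorem fderiv_fderiv_eq_smul_fderiv_log (hf : ContDiffAt ℝ 2 f x) (hx : f x ≠ 0) :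
    fderiv ℝ (fderiv ℝ f) x = f x • (fderiv ℝ (fderiv ℝ fun z => Real.log (f z)) x +
      (fderiv ℝ (fun z => Real.log (f z)) x).smulRight
        (fderiv ℝ (fun z => Real.log (f z)) x)) := by
  have hdiff : DifferentiableAt ℝ f x := hf.differentiableAt two_ne_zero
  have hlogdiff : DifferentiableAt ℝ (fderiv ℝ fun z => Real.log (f z)) x :=
    ((hf.log hx).fderiv_right (m := 1) (by norm_num)).differentiableAt one_ne_zero
  have hfirst : fderiv ℝ f =ᶠ[𝓝 x] fun z => f z • fderiv ℝ (fun z => Real.log (f z)) z := by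
    filter_upwards [hf.eventually (by simp), hf.continuousAt.eventually_ne hx] with z hz hz₀
    exact fderiv_eq_smul_fderiv_log (hz.differentiableAt two_ne_zero) hz₀
  rw [hfirst.fderiv_eq, fderiv_fun_smul hdiff hlogdiff, fderiv_eq_smul_fderiv_log hdiff hx]
  ext u v
  simp
  ring

theorem norm_iteratedFDeriv_two_le_mul_fderiv_log (hf : ContDiffAt ℝ 2 f x) (hx : f x ≠ 0) :
    ‖iteratedFDeriv ℝ 2 f x‖ ≤ |f x| * (‖iteratedFDeriv ℝ 2 (fun z => Real.log (f z)) x‖ +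
      ‖fderiv ℝ (fun z => Real.log (f z)) x‖ ^ 2) := by
  simp only [norm_iteratedFDeriv_two]
  rw [fderiv_fderiv_eq_smul_fderiv_log hf hx, norm_smul, Real.norm_eq_abs, sq,
    ← ContinuousLinearMap.norm_smulRight_apply]
  gcongr
  exact norm_add_le _ _

theorem fderiv_log_sq_div_const (hq : DifferentiableAt ℝ q x) (hx : q x ≠ 0) (hc : c ≠ 0) :
    fderiv ℝ (fun z => Real.log (q z ^ 2 / c)) x
      = (2 : ℝ) • fderiv ℝ (fun z => Real.log (q z)) x := by
  have hlog : (fun z => Real.log (q z ^ 2 / c)) =ᶠ[𝓝 x]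
      fun z => 2 * Real.log (q z) - Real.log c := by
    filter_upwards [hq.continuousAt.eventually_ne hx] with z hz
    rw [Real.log_div (pow_ne_zero 2 hz) hc, Real.log_pow, Nat.cast_ofNat]
  rw [hlog.fderiv_eq, fderiv_sub_const, fderiv_const_mul (hq.log hx)]

theorem norm_iteratedFDeriv_two_sq_div_const_le (hq : ContDiffAt ℝ 2 q x) (hx : q x ≠ 0)
    (hc : c ≠ 0) :
    ‖iteratedFDeriv ℝ 2 (fun z => q z ^ 2 / c) x‖ ≤
      |q x ^ 2 / c| * (4 * ‖fderiv ℝ (fun z => Real.log (q z)) x‖ ^ 2 +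
        2 * ‖iteratedFDeriv ℝ 2 (fun z => Real.log (q z)) x‖) := by
  have hfirst : fderiv ℝ (fun z => Real.log (q z ^ 2 / c)) =ᶠ[𝓝 x]
      (2 : ℝ) • fderiv ℝ fun z => Real.log (q z) := by
    filter_upwards [hq.eventually (by simp), hq.continuousAt.eventually_ne hx] with z hz hz₀
    exact fderiv_log_sq_div_const (hz.differentiableAt two_ne_zero) hz₀ hc
  have hlogdiff : DifferentiableAt ℝ (fderiv ℝ fun z => Real.log (q z)) x :=
    ((hq.log hx).fderiv_right (m := 1) (by norm_num)).differentiableAt one_ne_zero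
  refine (norm_iteratedFDeriv_two_le_mul_fderiv_log ((hq.pow 2).div_const c)
    (div_ne_zero (pow_ne_zero 2 hx) hc)).trans_eq ?_
  rw [norm_iteratedFDeriv_two, norm_iteratedFDeriv_two, hfirst.fderiv_eq, hfirst.eq_of_nhds,
    fderiv_const_smul hlogdiff, Pi.smul_apply, norm_smul, norm_smul, Real.norm_two]
  ring

theorem fderiv_sq_div_self (hq : DifferentiableAt ℝ q x) (hx : q x ≠ 0) :
    fderiv ℝ (fun z => q z ^ 2 / q x) x = (2 : ℝ) • fderiv ℝ q x := by
  have hsq : DifferentiableAt ℝ (fun z => q z ^ 2 / q x) x := by fun_prop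
  have hval : q x ^ 2 / q x = q x := by rw [sq, mul_self_div_self]
  rw [fderiv_eq_smul_fderiv_log hsq (by rwa [hval]), fderiv_log_sq_div_const hq hx hx, hval,
    smul_comm, ← fderiv_eq_smul_fderiv_log hq hx]

end LogDerivative

section Integral

variable {T : Type*} [MeasurableSpace T] {μ : Measure T}

theorem variance_div_withDensity {f g : T → ℝ} (hf : AEStronglyMeasurable f μ)
    (hg : ∀ᵐ τ ∂μ, 0 < g τ) (hg_one : ∫ τ, g τ ∂μ = 1)
    (hfg : Integrable (fun τ => f τ ^ 2 / g τ) μ) :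
    ProbabilityTheory.variance (fun τ => f τ / g τ)
      (μ.withDensity fun τ => ENNReal.ofReal (g τ))
        = ∫ τ, f τ ^ 2 / g τ ∂μ - (∫ τ, f τ ∂μ) ^ 2 := by
  set ν := μ.withDensity fun τ => ENNReal.ofReal (g τ) with hν
  have hg_int : Integrable g μ := integrable_of_integral_eq_one hg_one
  have hg_meas : AEMeasurable (fun τ => ENNReal.ofReal (g τ)) μ :=
    hg_int.aemeasurable.ennreal_ofReal
  have hg_lt_top : ∀ᵐ τ ∂μ, ENNReal.ofReal (g τ) < ⊤ := ae_of_all _ fun _ => ENNReal.ofReal_lt_top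
  have : IsProbabilityMeasure ν := ⟨by
    rw [hν, withDensity_apply _ MeasurableSet.univ, Measure.restrict_univ,
      ← ofReal_integral_eq_lintegral_ofReal hg_int (hg.mono fun _ => le_of_lt), hg_one,
      ENNReal.ofReal_one]⟩
  have hmean : (fun τ => (ENNReal.ofReal (g τ)).toReal • (f τ / g τ)) =ᵐ[μ] f := by
    filter_upwards [hg] with τ hτ
    rw [ENNReal.toReal_ofReal hτ.le, smul_eq_mul, mul_div_cancel₀ _ hτ.ne']
  have hsq : (fun τ => (ENNReal.ofReal (g τ)).toReal • (f τ / g τ) ^ 2)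
      =ᵐ[μ] fun τ => f τ ^ 2 / g τ := by
    filter_upwards [hg] with τ hτ
    rw [ENNReal.toReal_ofReal hτ.le, smul_eq_mul]
    field_simp
  have hratio : MemLp (fun τ => f τ / g τ) 2 ν := by
    have hmeas : AEStronglyMeasurable (fun τ => f τ / g τ) ν :=
      (hf.aemeasurable.div hg_int.aemeasurable).aestronglyMeasurable.mono_ac
        (withDensity_absolutelyContinuous _ _)
    rw [memLp_two_iff_integrable_sq hmeas,
      integrable_withDensity_iff_integrable_smul₀' hg_meas hg_lt_top]
    exact hfg.congr hsq.symm
  rw [ProbabilityTheory.variance_eq_sub hratio]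
  simp only [Pi.pow_apply, hν, integral_withDensity_eq_integral_toReal_smul₀ hg_meas hg_lt_top,
    integral_congr_ae hmean, integral_congr_ae hsq]

variable {E : Type*} [NormedAddCommGroup E] [NormedSpace ℝ E] {p : E → T → ℝ} {c : T → ℝ}
  {x : E} {G M : ℝ}

theorem norm_integral_iteratedFDeriv_two_sq_div_le
    (hp : ∀ᵐ τ ∂μ, ContDiffAt ℝ 2 (fun z => p z τ) x) (hx : ∀ᵐ τ ∂μ, p x τ ≠ 0)
    (hc : ∀ᵐ τ ∂μ, 0 < c τ)
    (hG : ∀ᵐ τ ∂μ, ‖fderiv ℝ (fun z => Real.log (p z τ)) x‖ ≤ G)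
    (hM : ∀ᵐ τ ∂μ, ‖iteratedFDeriv ℝ 2 (fun z => Real.log (p z τ)) x‖ ≤ M)
    (hint : Integrable (fun τ => p x τ ^ 2 / c τ) μ) :
    ‖∫ τ, iteratedFDeriv ℝ 2 (fun z => p z τ ^ 2 / c τ) x ∂μ‖ ≤
      (4 * G ^ 2 + 2 * M) * ∫ τ, p x τ ^ 2 / c τ ∂μ := by
  rw [mul_comm, ← integral_mul_const]
  refine norm_integral_le_of_norm_le (hint.mul_const _) ?_
  filter_upwards [hp, hx, hc, hG, hM] with τ hp hx hc hG hM
  refine (norm_iteratedFDeriv_two_sq_div_const_le hp hx hc.ne').trans ?_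
  rw [abs_of_nonneg (by positivity)]
  gcongr

theorem integral_fderiv_sq_div_self (hp : ∀ᵐ τ ∂μ, DifferentiableAt ℝ (fun z => p z τ) x)
    (hx : ∀ᵐ τ ∂μ, p x τ ≠ 0) :
    ∫ τ, fderiv ℝ (fun z => p z τ ^ 2 / p x τ) x ∂μ
      = (2 : ℝ) • ∫ τ, fderiv ℝ (fun z => p z τ) x ∂μ := by
  rw [← integral_smul]
  refine integral_congr_ae ?_
  filter_upwards [hp, hx] with τ hp hx
  exact fderiv_sq_div_self hp hx

theorem toDual_integral_gradient {H : Type*} [NormedAddCommGroup H] [InnerProductSpace ℝ H]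
    [CompleteSpace H] (f : T → H → ℝ) (x : H) :
    InnerProductSpace.toDual ℝ H (∫ τ, gradient (f τ) x ∂μ) = ∫ τ, fderiv ℝ (f τ) x ∂μ := by
  simp only [← toDual_gradient]
  exact ((InnerProductSpace.toDual ℝ H).toContinuousLinearEquiv.integral_comp_comm _).symm

end Integral

theorem importance_weight_variance_bound_general {T E : Type*} [MeasurableSpace T]
    {μ : Measure T} [NormedAddCommGroup E] [NormedSpace ℝ E] {θ₁ θ₂ : E} {G M W : ℝ}
    (hM_nonneg : 0 ≤ M) {p : E → T → ℝ} (hpos : ∀ θ τ, 0 < p θ τ)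
    (hnorm : ∀ θ, ∫ τ, p θ τ ∂μ = 1)
    (hsmooth : ∀ τ, ∀ θ ∈ segment ℝ θ₂ θ₁, ContDiffAt ℝ 2 (fun θ' => p θ' τ) θ)
    (hG : ∀ τ, ∀ θ ∈ segment ℝ θ₂ θ₁, ‖fderiv ℝ (fun θ' => Real.log (p θ' τ)) θ‖ ≤ G)
    (hM : ∀ τ, ∀ θ ∈ segment ℝ θ₂ θ₁,
      ‖iteratedFDeriv ℝ 2 (fun θ' => Real.log (p θ' τ)) θ‖ ≤ M)
    {D : E → ℝ} (hD : ∀ θ, D θ = ∫ τ, p θ τ ^ 2 / p θ₂ τ ∂μ)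
    (hDfin : ∀ θ ∈ segment ℝ θ₂ θ₁, Integrable (fun τ => p θ τ ^ 2 / p θ₂ τ) μ)
    (hDC2 : ∀ θ ∈ segment ℝ θ₂ θ₁, ContDiffAt ℝ 2 D θ)
    (hfderivD : fderiv ℝ D θ₂ = ∫ τ, fderiv ℝ (fun θ => p θ τ ^ 2 / p θ₂ τ) θ₂ ∂μ)
    (hhessD : ∀ θ ∈ segment ℝ θ₂ θ₁,
      iteratedFDeriv ℝ 2 D θ = ∫ τ, iteratedFDeriv ℝ 2 (fun θ' => p θ' τ ^ 2 / p θ₂ τ) θ ∂μ)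
    (hfderiv_zero : ∫ τ, fderiv ℝ (fun θ => p θ τ) θ₂ ∂μ = 0)
    (hDbd : ∀ θ ∈ segment ℝ θ₂ θ₁, D θ ≤ W + 1) :
    ProbabilityTheory.variance (fun τ => p θ₁ τ / p θ₂ τ)
        (μ.withDensity (fun τ => ENNReal.ofReal (p θ₂ τ))) = D θ₁ - 1 ∧
      D θ₁ - 1 ≤ (2 * G ^ 2 + M) * (W + 1) * ‖θ₁ - θ₂‖ ^ 2 := by
  have hθ₂ : θ₂ ∈ segment ℝ θ₂ θ₁ := left_mem_segment ℝ θ₂ θ₁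
  constructor
  · rw [variance_div_withDensity (integrable_of_integral_eq_one (hnorm θ₁)).aestronglyMeasurable
      (ae_of_all _ (hpos θ₂)) (hnorm θ₂) (hDfin θ₁ (right_mem_segment ℝ θ₂ θ₁)), hnorm, hD, one_pow]
  have hD_one : D θ₂ = 1 := by
    simp only [hD, sq, mul_self_div_self, hnorm]
  have hD_crit : fderiv ℝ D θ₂ = 0 := by
    rw [hfderivD, integral_fderiv_sq_div_self
      (ae_of_all _ fun τ => (hsmooth τ θ₂ hθ₂).differentiableAt two_ne_zero)
      (ae_of_all _ fun τ => (hpos θ₂ τ).ne'), hfderiv_zero, smul_zero]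
  have hD_hess : ∀ θ ∈ segment ℝ θ₂ θ₁,
      ‖iteratedFDeriv ℝ 2 D θ‖ ≤ (4 * G ^ 2 + 2 * M) * (W + 1) := fun θ hθ =>
    calc ‖iteratedFDeriv ℝ 2 D θ‖ ≤ (4 * G ^ 2 + 2 * M) * D θ := by
          rw [hhessD θ hθ, hD]
          exact norm_integral_iteratedFDeriv_two_sq_div_le
            (ae_of_all _ fun τ => hsmooth τ θ hθ) (ae_of_all _ fun τ => (hpos θ τ).ne')
            (ae_of_all _ (hpos θ₂)) (ae_of_all _ fun τ => hG τ θ hθ)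
            (ae_of_all _ fun τ => hM τ θ hθ) (hDfin θ hθ)
      _ ≤ (4 * G ^ 2 + 2 * M) * (W + 1) := by
          gcongr
          exact hDbd θ hθ
  have htaylor := norm_sub_sub_fderiv_apply_le_of_norm_iteratedFDeriv_two_le hDC2 hD_hess
  rw [hD_crit, hD_one, zero_apply, sub_zero] at htaylor
  calc D θ₁ - 1 ≤ (4 * G ^ 2 + 2 * M) * (W + 1) / 2 * ‖θ₁ - θ₂‖ ^ 2 :=
        (le_abs_self _).trans htaylor
    _ = (2 * G ^ 2 + M) * (W + 1) * ‖θ₁ - θ₂‖ ^ 2 := by ring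

/-- Variance bound for importance sampling weights: under smoothness and boundedness of
the family of densities `p(θ, ·)` along the segment from `θ₂` to `θ₁`, the importance
weight `ω(τ) = p(θ₁,τ)/p(θ₂,τ)`, as a random variable under the probability measure with
density `p(θ₂,·)` w.r.t. `μ`, has variance `D(θ₁) - 1 ≤ (2G'² + M')(W+1)‖θ₁ - θ₂‖²`,
where `D(θ) = ∫ p(θ,τ)²/p(θ₂,τ) dμ`. -/
theorem importance_weight_variance_bound {T : Type*} [MeasurableSpace T] (μ : Measure T)
    {d : ℕ} (θ₁ θ₂ : EuclideanSpace ℝ (Fin d)) (G' M' W : ℝ)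
    (hG' : 0 ≤ G') (hM' : 0 ≤ M') (hW : 0 ≤ W)
    (p : EuclideanSpace ℝ (Fin d) → T → ℝ)
    (hmeas : ∀ θ, Measurable (p θ))
    (hpos : ∀ θ τ, 0 < p θ τ)
    (hnorm : ∀ θ, ∫ τ, p θ τ ∂μ = 1)
    (hsmooth : ∀ τ, ContDiff ℝ 2 (fun θ => p θ τ))
    (hscore : ∀ τ, ∀ θ ∈ segment ℝ θ₂ θ₁,
      ‖gradient (fun θ' => Real.log (p θ' τ)) θ‖ ≤ G')
    (hloghess : ∀ τ, ∀ θ ∈ segment ℝ θ₂ θ₁,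
      ‖iteratedFDeriv ℝ 2 (fun θ' => Real.log (p θ' τ)) θ‖ ≤ M')
    (D : EuclideanSpace ℝ (Fin d) → ℝ)
    (hD : ∀ θ, D θ = ∫ τ, p θ τ ^ 2 / p θ₂ τ ∂μ)
    (hDfin : ∀ θ ∈ segment ℝ θ₂ θ₁, Integrable (fun τ => p θ τ ^ 2 / p θ₂ τ) μ)
    (hDC2 : ∀ θ ∈ segment ℝ θ₂ θ₁, ContDiffAt ℝ 2 D θ)
    (hgradD : ∀ θ ∈ segment ℝ θ₂ θ₁,
      gradient D θ = ∫ τ, gradient (fun θ' => p θ' τ ^ 2 / p θ₂ τ) θ ∂μ)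
    (hhessD : ∀ θ ∈ segment ℝ θ₂ θ₁,
      iteratedFDeriv ℝ 2 D θ
        = ∫ τ, iteratedFDeriv ℝ 2 (fun θ' => p θ' τ ^ 2 / p θ₂ τ) θ ∂μ)
    (hgradzero : (∫ τ, gradient (fun θ => p θ τ) θ₂ ∂μ) = 0)
    (hDbd : ∀ θ ∈ segment ℝ θ₂ θ₁, D θ ≤ W + 1) :
    ProbabilityTheory.variance (fun τ => p θ₁ τ / p θ₂ τ)
        (μ.withDensity (fun τ => ENNReal.ofReal (p θ₂ τ))) = D θ₁ - 1 ∧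
    D θ₁ - 1 ≤ (2 * G' ^ 2 + M') * (W + 1) * ‖θ₁ - θ₂‖ ^ 2 :=
  importance_weight_variance_bound_general hM' hpos hnorm (fun τ _ _ => (hsmooth τ).contDiffAt)
    (by simpa only [← toDual_gradient, LinearIsometryEquiv.norm_map] using hscore) hloghess hD hDfin
    hDC2 (by rw [← toDual_gradient, hgradD θ₂ (left_mem_segment ℝ θ₂ θ₁), toDual_integral_gradient])
    hhessD (by rw [← toDual_integral_gradient, hgradzero, map_zero]) hDbd
end

section
/- Let (T, 𝒯, μ) be a measure space, d ∈ ℕ, θ, θ₂ ∈ ℝ^d, G', M' ≥ 0, and let p : ℝ^d × T → (0, ∞) be such that each p(θ', ·) is measurable, each τ-section θ' ↦ p(θ', τ) is twice differentiable at θ with ‖∇_θ log p(θ, τ)‖₂ ≤ G' and ‖∇²_θ log p(θ, τ)‖_op ≤ M' for all τ. Suppose D(θ) = ∫_T p(θ, τ)²/p(θ₂, τ) dμ(τ) is finite and twice differentiable at θ with ∇²D(θ) = ∫_T ∇²_θ (p(θ, τ)²/p(θ₂, τ)) dμ(τ) (differentiation under the integral). Then ‖∇²D(θ)‖_op ≤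 (4G'² + 2M')·D(θ). -/
open MeasureTheory

/-!
Writing `f ^ a = exp (a log f)` gives `∇²(f ^ a) = f ^ a (a ∇²log f + a² ∇log f (∇log f)ᵀ)`, so the
Hessian of `f ^ a` is at most `f ^ a` times a constant depending only on the first two derivatives
of `log f`. With uniform bounds on these, integrating against `q ^ (1 - a)` bounds the Hessian of
`∫ p ^ a q ^ (1 - a)` by the same constant times the integral itself; the divergence `D` is the
case `a = 2`, `q = p θ₂`.
-/

section SecondDerivative

variable {E : Type*} [NormedAddCommGroup E] [NormedSpace ℝ E] {f : E → ℝ} {x : E}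

theorem iteratedFDeriv_two_exp_apply (hf : ContDiffAt ℝ 2 f x) (m : Fin 2 → E) :
    iteratedFDeriv ℝ 2 (fun y => Real.exp (f y)) x m =
      Real.exp (f x) * (iteratedFDeriv ℝ 2 f x m + fderiv ℝ f x (m 0) * fderiv ℝ f x (m 1)) := by
  have fderiv_exp_near : fderiv ℝ (fun y => Real.exp (f y)) =ᶠ[nhds x]
      fun y => Real.exp (f y) • fderiv ℝ f y := by
    filter_upwards [hf.eventually (by simp)] with y hy
    exact fderiv_exp (hy.differentiableAt two_ne_zero)
  have hasFDerivAt_f : HasFDerivAt f (fderiv ℝ f x) x :=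
    (hf.differentiableAt two_ne_zero).hasFDerivAt
  have hasFDerivAt_fderiv : HasFDerivAt (fderiv ℝ f) (fderiv ℝ (fderiv ℝ f) x) x :=
    ((hf.fderiv_right (m := 1) (by norm_num)).differentiableAt one_ne_zero).hasFDerivAt
  rw [iteratedFDeriv_two_apply, iteratedFDeriv_two_apply, fderiv_exp_near.fderiv_eq,
    (hasFDerivAt_f.exp.fun_smul hasFDerivAt_fderiv).fderiv]
  simp only [add_apply, smul_apply, ContinuousLinearMap.smulRight_apply, smul_eq_mul]
  ring

theorem iteratedFDeriv_two_rpow_apply (hf : ContDiffAt ℝ 2 f x) (hx : 0 < f x) (a : ℝ)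
    (m : Fin 2 → E) :
    iteratedFDeriv ℝ 2 (fun y => f y ^ a) x m =
      f x ^ a * (a * iteratedFDeriv ℝ 2 (fun y => Real.log (f y)) x m +
        a ^ 2 * (fderiv ℝ (fun y => Real.log (f y)) x (m 0) *
          fderiv ℝ (fun y => Real.log (f y)) x (m 1))) := by
  have hlog : ContDiffAt ℝ 2 (fun y => Real.log (f y)) x := hf.log hx.ne'
  have rpow_eq_exp : ∀ y, 0 < f y → f y ^ a = Real.exp (a • Real.log (f y)) := fun y hy => by
    rw [Real.rpow_def_of_pos hy, smul_eq_mul, mul_comm]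
  have rpow_eq_exp_near : (fun y => f y ^ a) =ᶠ[nhds x] fun y => Real.exp (a • Real.log (f y)) :=
    (hf.continuousAt.eventually_const_lt hx).mono rpow_eq_exp
  rw [(rpow_eq_exp_near.iteratedFDeriv ℝ 2).eq_of_nhds,
    iteratedFDeriv_two_exp_apply (hlog.const_smul a), iteratedFDeriv_const_smul_apply' hlog,
    fderiv_fun_const_smul (hlog.differentiableAt two_ne_zero), ← rpow_eq_exp x hx]
  simp only [smul_apply, smul_eq_mul]
  ring

theorem norm_iteratedFDeriv_two_rpow_le (hf : ContDiffAt ℝ 2 f x) (hx : 0 < f x) (a : ℝ) :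
    ‖iteratedFDeriv ℝ 2 (fun y => f y ^ a) x‖ ≤
      (a ^ 2 * ‖fderiv ℝ (fun y => Real.log (f y)) x‖ ^ 2 +
        |a| * ‖iteratedFDeriv ℝ 2 (fun y => Real.log (f y)) x‖) * f x ^ a := by
  refine ContinuousMultilinearMap.opNorm_le_bound (by positivity) fun m => ?_
  rw [iteratedFDeriv_two_rpow_apply hf hx, Fin.prod_univ_two]
  set L := fderiv ℝ (fun y => Real.log (f y)) x
  set H := iteratedFDeriv ℝ 2 (fun y => Real.log (f y)) x
  have norm_H_apply_le : ‖H m‖ ≤ ‖H‖ * (‖m 0‖ * ‖m 1‖) := by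
    simpa only [Fin.prod_univ_two] using H.le_opNorm m
  calc ‖f x ^ a * (a * H m + a ^ 2 * (L (m 0) * L (m 1)))‖
      = f x ^ a * ‖a * H m + a ^ 2 * (L (m 0) * L (m 1))‖ := by
        rw [norm_mul, Real.norm_of_nonneg (by positivity)]
    _ ≤ f x ^ a * (|a| * ‖H m‖ + a ^ 2 * (‖L (m 0)‖ * ‖L (m 1)‖)) := by
        gcongr
        refine (norm_add_le _ _).trans_eq ?_
        simp only [norm_mul, norm_pow, Real.norm_eq_abs, sq_abs]
    _ ≤ f x ^ a * (|a| * (‖H‖ * (‖m 0‖ * ‖m 1‖)) +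
          a ^ 2 * ((‖L‖ * ‖m 0‖) * (‖L‖ * ‖m 1‖))) := by
        gcongr <;> exact L.le_opNorm _
    _ = (a ^ 2 * ‖L‖ ^ 2 + |a| * ‖H‖) * f x ^ a * (‖m 0‖ * ‖m 1‖) := by ring

end SecondDerivative

theorem renyi_divergence_hessian_bound_general {T E : Type*} [MeasurableSpace T]
    [NormedAddCommGroup E] [NormedSpace ℝ E] {μ : Measure T} {θ : E} {a G M : ℝ}
    {p : E → T → ℝ} {q : T → ℝ}
    (hp : ∀ᵐ τ ∂μ, 0 < p θ τ) (hq : ∀ᵐ τ ∂μ, 0 < q τ)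
    (hsmooth : ∀ᵐ τ ∂μ, ContDiffAt ℝ 2 (fun θ' => p θ' τ) θ)
    (hscore : ∀ᵐ τ ∂μ, ‖fderiv ℝ (fun θ' => Real.log (p θ' τ)) θ‖ ≤ G)
    (hloghess : ∀ᵐ τ ∂μ, ‖iteratedFDeriv ℝ 2 (fun θ' => Real.log (p θ' τ)) θ‖ ≤ M)
    (hfin : Integrable (fun τ => p θ τ ^ a * q τ ^ (1 - a)) μ) :
    ‖∫ τ, iteratedFDeriv ℝ 2 (fun θ' => p θ' τ ^ a * q τ ^ (1 - a)) θ ∂μ‖ ≤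
      (a ^ 2 * G ^ 2 + |a| * M) * ∫ τ, p θ τ ^ a * q τ ^ (1 - a) ∂μ := by
  rw [← integral_const_mul]
  refine norm_integral_le_of_norm_le (hfin.const_mul _) ?_
  filter_upwards [hp, hq, hsmooth, hscore, hloghess] with τ hpτ hqτ hsmoothτ hscoreτ hloghessτ
  have hrpow : ContDiffAt ℝ 2 (fun θ' => p θ' τ ^ a) θ := hsmoothτ.rpow_const_of_ne hpτ.ne'
  have const_smul_form : (fun θ' => p θ' τ ^ a * q τ ^ (1 - a)) =
      fun θ' => q τ ^ (1 - a) • p θ' τ ^ a := funext fun _ => mul_comm _ _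
  calc ‖iteratedFDeriv ℝ 2 (fun θ' => p θ' τ ^ a * q τ ^ (1 - a)) θ‖
      = q τ ^ (1 - a) * ‖iteratedFDeriv ℝ 2 (fun θ' => p θ' τ ^ a) θ‖ := by
        rw [const_smul_form, iteratedFDeriv_const_smul_apply' hrpow, norm_smul,
          Real.norm_of_nonneg (by positivity)]
    _ ≤ q τ ^ (1 - a) * ((a ^ 2 * G ^ 2 + |a| * M) * p θ τ ^ a) := by
        gcongr
        refine (norm_iteratedFDeriv_two_rpow_le hsmoothτ hpτ a).trans ?_
        gcongr
    _ = (a ^ 2 * G ^ 2 + |a| * M) * (p θ τ ^ a * q τ ^ (1 - a)) := by ring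

/-- Hessian bound for the exponentiated Rényi divergence of order 2,
`D(θ) = ∫ p(θ,τ)²/p(θ₂,τ) dμ`: under the score bound `G'` and log-Hessian bound `M'`
at `θ`, and differentiation under the integral sign, `‖∇²D(θ)‖ ≤ (4G'² + 2M')·D(θ)`. -/
theorem renyi_divergence_hessian_bound {T : Type*} [MeasurableSpace T] (μ : Measure T)
    {d : ℕ} (θ θ₂ : EuclideanSpace ℝ (Fin d)) (G' M' : ℝ) (hG' : 0 ≤ G') (hM' : 0 ≤ M')
    (p : EuclideanSpace ℝ (Fin d) → T → ℝ)
    (hmeas : ∀ θ', Measurable (p θ'))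
    (hpos : ∀ θ' τ, 0 < p θ' τ)
    (hsmooth : ∀ τ, ContDiffAt ℝ 2 (fun θ' => p θ' τ) θ)
    (hscore : ∀ τ, ‖gradient (fun θ' => Real.log (p θ' τ)) θ‖ ≤ G')
    (hloghess : ∀ τ, ‖iteratedFDeriv ℝ 2 (fun θ' => Real.log (p θ' τ)) θ‖ ≤ M')
    (D : EuclideanSpace ℝ (Fin d) → ℝ)
    (hD : ∀ θ', D θ' = ∫ τ, p θ' τ ^ 2 / p θ₂ τ ∂μ)
    (hfin : Integrable (fun τ => p θ τ ^ 2 / p θ₂ τ) μ)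
    (hC2 : ContDiffAt ℝ 2 D θ)
    (hhessD : iteratedFDeriv ℝ 2 D θ
      = ∫ τ, iteratedFDeriv ℝ 2 (fun θ' => p θ' τ ^ 2 / p θ₂ τ) θ ∂μ) :
    ‖iteratedFDeriv ℝ 2 D θ‖ ≤ (4 * G' ^ 2 + 2 * M') * D θ := by
  have order_two (x y : ℝ) : x ^ (2 : ℝ) * y ^ (1 - 2 : ℝ) = x ^ 2 / y := by
    norm_num [Real.rpow_neg_one, div_eq_mul_inv]
  have four_eq : (4 : ℝ) = 2 ^ 2 := by norm_num
  have score_le (τ : T) : ‖fderiv ℝ (fun θ' => Real.log (p θ' τ)) θ‖ ≤ G' := by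
    simpa only [gradient, LinearIsometryEquiv.norm_map] using hscore τ
  rw [hhessD, hD, four_eq]
  simpa only [order_two, abs_two] using renyi_divergence_hessian_bound_general (a := 2)
    (.of_forall (hpos θ)) (.of_forall (hpos θ₂)) (.of_forall hsmooth) (.of_forall score_le)
    (.of_forall hloghess) (by simpa only [order_two] using hfin)
end
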